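/- Nonemptiness characterization for NFH_∀: an NFH_∀ 𝓐 with k variables has a nonempty hyperlanguage, 𝓛(𝓐) ≠ ∅, if and only if 𝓐 accepts a hyperword of size 1; equivalently, if and only if there exists a word u over Σ such that zip(u,u,…,u) (the k-fold zip of u with itself) is accepted by the underlying NFA Â. -/

import Mathlib

/-- The length of the longest word in a `k`-tuple of words. -/
def maxLen {α : Type} {k : ℕ} (v : Fin k → List α) : ℕ :=
  Finset.univ.sup fun i => (v i).length

/-- `zip` of a `k`-tuple of words over `α`: the word over `k`-tuples of
`Option α`, where `none` plays the role of the padding symbol `#`. Its length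
is the length of the longest word, and its `j`-th letter has `i`-th component
the `j`-th letter of the `i`-th word (or `#` = `none` if that word has ended). -/
def zipWord {α : Type} {k : ℕ} (v : Fin k → List α) : List (Fin k → Option α) :=
  (List.range (maxLen v)).map fun j i => (v i)[j]?

/-- A nondeterministic finite hyperautomaton (NFH) with `k` word variables:
an NFA over the alphabet of `k`-tuples `(Σ ∪ {#})ᵏ` together with a
quantification condition, where the `i`-th quantifier binds the `i`-th
variable (`true` = ∃, `false` = ∀). -/
structure NFH (α σ : Type) (k : ℕ) where
  quant : Fin k → Bool
  aut : NFA (Fin k → Option α) σ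

/-- Satisfaction of the suffix `𝔔ᵢ₊₁xᵢ₊₁ ⋯ 𝔔ₖxₖ` of the quantification
condition by a hyperword `S`, given a partial assignment `v` to the first `i`
variables: when all variables are assigned, the underlying NFA must accept the
zip of the assignment. -/
def NFH.SatFrom {α σ : Type} {k : ℕ} (A : NFH α σ k) (S : Set (List α)) :
    ℕ → (Fin k → List α) → Prop
  | i, v =>
    if h : i < k then
      if A.quant ⟨i, h⟩ then
        ∃ w ∈ S, A.SatFrom S (i + 1) (Function.update v ⟨i, h⟩ w)
      else
        ∀ w ∈ S, A.SatFrom S (i + 1) (Function.update v ⟨i, h⟩ w)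
    else
      zipWord v ∈ A.aut.accepts
  termination_by i _ => k - i
  decreasing_by all_goals omega

/-- A hyperword `S` is accepted by the NFH `A` if it satisfies the full
quantification condition of `A`. -/
def NFH.Accepts {α σ : Type} {k : ℕ} (A : NFH α σ k) (S : Set (List α)) : Prop :=
  A.SatFrom S 0 fun _ => []

/-- The hyperlanguage of an NFH: the set of all nonempty hyperwords it accepts. -/
def NFH.hyperLang {α σ : Type} {k : ℕ} (A : NFH α σ k) : Set (Set (List α)) :=
  { S | S.Nonempty ∧ A.Accepts S }

/-!
Over a singleton `{u}` the quantifiers `∃` and `∀` coincide, and every variable is assigned `u`, so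
acceptance of `{u}` means that the automaton accepts `zip(u, …, u)`, whatever the quantification
condition. Universal conditions pass to subsets, so an accepted hyperword may be shrunk to the
singleton of any of its words. An existential leading quantifier is harmless: the singleton of a
witness for it works.
-/

namespace NFH

variable {α σ : Type} {k : ℕ} (A : NFH α σ k)

theorem satFrom_iff_of_le {S : Set (List α)} {i : ℕ} {v : Fin k → List α} (h : k ≤ i) :
    A.SatFrom S i v ↔ zipWord v ∈ A.aut.accepts := by
  rw [SatFrom, dif_neg h.not_gt]

theorem satFrom_iff_exists {S : Set (List α)} {i : Fin k} {v : Fin k → List α}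
    (h : A.quant i = true) :
    A.SatFrom S i v ↔ ∃ w ∈ S, A.SatFrom S (i + 1) (Function.update v i w) := by
  rw [SatFrom, dif_pos i.isLt, if_pos h]

theorem satFrom_iff_forall {S : Set (List α)} {i : Fin k} {v : Fin k → List α}
    (h : A.quant i = false) :
    A.SatFrom S i v ↔ ∀ w ∈ S, A.SatFrom S (i + 1) (Function.update v i w) := by
  rw [SatFrom, dif_pos i.isLt, if_neg (Bool.eq_false_iff.mp h)]

theorem satFrom_singleton_iff_succ {u : List α} {i : Fin k} {v : Fin k → List α} :
    A.SatFrom {u} i v ↔ A.SatFrom {u} (i + 1) (Function.update v i u) := by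
  cases h : A.quant i with
  | false => simp [satFrom_iff_forall A h]
  | true => simp [satFrom_iff_exists A h]

theorem satFrom_singleton_iff {u : List α} {i : ℕ} {v : Fin k → List α} :
    A.SatFrom {u} i v ↔
      zipWord (fun j : Fin k => if j < i then v j else u) ∈ A.aut.accepts := by
  rcases le_or_gt k i with hki | hik
  · have assigned (j : Fin k) : j < i := j.isLt.trans_le hki
    simp only [satFrom_iff_of_le A hki, assigned, if_true]
  · lift i to Fin k using hik
    have update_eq : (fun j : Fin k =>
        if (j : ℕ) < i + 1 then Function.update v i u j else u) =
          fun j : Fin k => if (j : ℕ) < i then v j else u := by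
      ext1 j
      rcases eq_or_ne j i with rfl | hj
      · simp
      · have hji : (j : ℕ) ≠ i := Fin.val_ne_of_ne hj
        simp only [Function.update_of_ne hj, Nat.lt_succ_iff_lt_or_eq, hji, or_false]
    rw [satFrom_singleton_iff_succ, satFrom_singleton_iff, update_eq]
  termination_by k - i

theorem accepts_singleton_iff {u : List α} :
    A.Accepts {u} ↔ zipWord (fun _ : Fin k => u) ∈ A.aut.accepts := by
  simp only [Accepts, satFrom_singleton_iff, Nat.not_lt_zero, if_false]

theorem singleton_mem_hyperLang_iff {u : List α} :
    {u} ∈ A.hyperLang ↔ A.Accepts {u} :=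
  and_iff_right (Set.singleton_nonempty u)

variable {A}

theorem SatFrom.anti {S T : Set (List α)} {i : ℕ} {v : Fin k → List α}
    (h : A.SatFrom T i v) (hST : S ⊆ T) (hq : ∀ j : Fin k, i ≤ j → A.quant j = false) :
    A.SatFrom S i v := by
  rcases le_or_gt k i with hki | hik
  · rwa [satFrom_iff_of_le A hki] at h ⊢
  · lift i to Fin k using hik
    rw [satFrom_iff_forall A (hq i le_rfl)] at h ⊢
    exact fun w hw => (h w (hST hw)).anti hST fun j hj => hq j (Nat.le_of_succ_le hj)
  termination_by k - i

theorem SatFrom.exists_singleton {S : Set (List α)} {i : ℕ} {v : Fin k → List α}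
    (h : A.SatFrom S i v) (hS : S.Nonempty) (hq : ∀ j : Fin k, i < j → A.quant j = false) :
    ∃ u ∈ S, A.SatFrom {u} i v := by
  rcases le_or_gt k i with hki | hik
  · obtain ⟨u, hu⟩ := hS
    exact ⟨u, hu, (satFrom_iff_of_le A hki).mpr ((satFrom_iff_of_le A hki).mp h)⟩
  · lift i to Fin k using hik
    obtain ⟨u, hu, h_succ⟩ : ∃ u ∈ S, A.SatFrom S (i + 1) (Function.update v i u) := by
      cases hi : A.quant i with
      | false =>
        obtain ⟨u, hu⟩ := hS
        exact ⟨u, hu, (satFrom_iff_forall A hi).mp h u hu⟩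
      | true => exact (satFrom_iff_exists A hi).mp h
    exact ⟨u, hu, (satFrom_singleton_iff_succ A).mpr <|
      h_succ.anti (Set.singleton_subset_iff.mpr hu) hq⟩

theorem hyperLang_nonempty_iff_exists_singleton
    (hq : ∀ i : Fin k, 0 < (i : ℕ) → A.quant i = false) :
    A.hyperLang.Nonempty ↔ ∃ u : List α, ({u} : Set (List α)) ∈ A.hyperLang := by
  constructor
  · rintro ⟨S, hS, hacc⟩
    obtain ⟨u, -, hu⟩ := SatFrom.exists_singleton hacc hS hq
    exact ⟨u, A.singleton_mem_hyperLang_iff.mpr hu⟩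
  · rintro ⟨u, hu⟩
    exact ⟨{u}, hu⟩

end NFH

theorem nfhA_nonemptiness_general {α σ : Type} {k : ℕ} (A : NFH α σ k)
    (hq : ∀ i : Fin k, 0 < (i : ℕ) → A.quant i = false) :
    (A.hyperLang.Nonempty ↔ ∃ u : List α, ({u} : Set (List α)) ∈ A.hyperLang) ∧
    (A.hyperLang.Nonempty ↔ ∃ u : List α, zipWord (fun _ => u) ∈ A.aut.accepts) := by
  have nonempty_iff := NFH.hyperLang_nonempty_iff_exists_singleton hq
  refine ⟨nonempty_iff, nonempty_iff.trans (exists_congr fun u => ?_)⟩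
  exact A.singleton_mem_hyperLang_iff.trans A.accepts_singleton_iff

/-- **Nonemptiness characterization for NFH_∀.** An NFH all of whose
quantifiers are ∀ has a nonempty hyperlanguage iff it accepts a hyperword of
size 1, equivalently iff its underlying NFA accepts the `k`-fold zip
`zip(u, …, u)` of some word `u`. -/
theorem nfhA_nonemptiness {α σ : Type} {k : ℕ} (A : NFH α σ k)
    (hq : ∀ i : Fin k, A.quant i = false) :
    (A.hyperLang.Nonempty ↔ ∃ u : List α, ({u} : Set (List α)) ∈ A.hyperLang) ∧
    (A.hyperLang.Nonempty ↔ ∃ u : List α, zipWord (fun _ => u) ∈ A.aut.accepts) :=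
  nfhA_nonemptiness_general A fun i _ => hq i
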